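/- (Admissibility of the min-sum MHPP heuristic.) Let G be a connected finite simple graph with unit edge costs, let there be N agents with start vertices o_1,…,o_N, a goal set V_d of vertices, M target vertices t_1,…,t_M, and eligibility sets f_A(v) ⊆ {1,…,N} for each vertex v. Suppose for each agent i there is a walk w_i in G from o_i to δ(i), where δ is an injective goal assignment with δ(i) ∈ V_d and i ∈ f_A(δ(i)), and suppose every target is covered: for each m there exists an agent i ∈ f_A(t_m) with t_m on the walk w_i. Then the sum Σ_i length(w_i) is at least the minimum, over all target assignments ψ : {1,…,M} → {1,…,N} with ψ(m) ∈ f_A(t_m), all injective goal assignments δ' with δ'(i) ∈ V_d and i ∈ f_A(δ'(i)), and all orderings (duplicate-free lists) σ_i enumerating ψ^{-1}(i) for each agent i, of Σ_i [the chained distance from o_i through σ_i to δ'(i)]. -/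

import Mathlib

/-- The chained distance `dist(u, t₁) + Σ_{j} dist(t_j, t_{j+1}) + dist(t_k, v)`
through a list of intermediate vertices, equal to `dist(u, v)` when the list is
empty.  This is the cost of the Hamiltonian path `u, t₁, …, t_k, v` in the
metric closure (target graph) of `G`. -/
noncomputable def chainedDist {V : Type*} (G : SimpleGraph V) : V → List V → V → ℕ
  | u, [], v => G.dist u v
  | u, t :: ts, v => G.dist u t + chainedDist G t ts v

/-!
Let each target be served by an eligible agent whose walk meets it, keep the given goals, and let
each agent visit its targets in the order in which they occur along its walk. By the triangle
inequality no agent's chained distance then exceeds the length of its walk, so the optimum is at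
most the total length.
-/

section ChainedDist

variable {V : Type*} {G : SimpleGraph V} {u v : V}

theorem chainedDist_cons_self (u : V) (l : List V) (v : V) :
    chainedDist G u (u :: l) v = chainedDist G u l v := by
  rw [chainedDist, SimpleGraph.dist_self, zero_add]

theorem chainedDist_le_dist_add (huv : G.Reachable u v) (l : List V) (w : V) :
    chainedDist G u l w ≤ G.dist u v + chainedDist G v l w := by
  cases l with
  | nil => exact huv.dist_triangle_left w
  | cons t l =>
    calc G.dist u t + chainedDist G t l w
        ≤ (G.dist u v + G.dist v t) + chainedDist G t l w := by
          gcongr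
          exact huv.dist_triangle_left t
      _ = G.dist u v + (G.dist v t + chainedDist G t l w) := add_assoc _ _ _

theorem chainedDist_le_chainedDist_add_one (h : G.Adj u v) (l : List V) (w : V) :
    chainedDist G u l w ≤ chainedDist G v l w + 1 := by
  simpa only [SimpleGraph.dist_eq_one_iff_adj.mpr h, add_comm] using
    chainedDist_le_dist_add h.reachable l w

theorem chainedDist_le_length_of_sublist_support (p : G.Walk u v) {l : List V}
    (hl : l.Sublist p.support) : chainedDist G u l v ≤ p.length := by
  induction p generalizing l with
  | @nil u =>
    rw [SimpleGraph.Walk.support_nil, List.sublist_singleton] at hl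
    rcases hl with rfl | rfl <;> simp [chainedDist]
  | @cons u x v h p ih =>
    have le_of_sublist_tail {l' : List V} (hl' : l'.Sublist p.support) :
        chainedDist G u l' v ≤ p.length + 1 :=
      (chainedDist_le_chainedDist_add_one h l' v).trans (Nat.add_le_add_right (ih hl') 1)
    rw [SimpleGraph.Walk.support_cons, List.sublist_cons_iff] at hl
    rw [SimpleGraph.Walk.length_cons]
    rcases hl with hl | ⟨l', rfl, hl'⟩
    · exact le_of_sublist_tail hl
    · rw [chainedDist_cons_self]
      exact le_of_sublist_tail hl'

theorem exists_nodup_mem_iff_chainedDist_le_length (p : G.Walk u v) {S : Set V}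
    (hS : ∀ x ∈ S, x ∈ p.support) :
    ∃ l : List V, l.Nodup ∧ (∀ x, x ∈ l ↔ x ∈ S) ∧ chainedDist G u l v ≤ p.length := by
  classical
  refine ⟨p.support.dedup.filter (· ∈ S), (List.nodup_dedup _).filter _, fun x => ?_,
    chainedDist_le_length_of_sublist_support p
      (List.filter_sublist.trans (List.dedup_sublist _))⟩
  simpa only [List.mem_filter, List.mem_dedup, decide_eq_true_eq, and_iff_right_iff_imp] using hS x

end ChainedDist

theorem minsum_mhpp_admissible_general {V ι κ : Type*} (G : SimpleGraph V) (o δ : ι → V)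
    (t : κ → V) (fA : V → Set ι) (w : ∀ i, G.Walk (o i) (δ i))
    (hcover : ∀ m, ∃ i, i ∈ fA (t m) ∧ t m ∈ (w i).support) :
    ∃ (ψ : κ → ι) (σ : ι → List V),
      (∀ m, ψ m ∈ fA (t m)) ∧
      (∀ i, (σ i).Nodup ∧ (∀ x, x ∈ σ i ↔ ∃ m, ψ m = i ∧ t m = x)) ∧
      ∀ i, chainedDist G (o i) (σ i) (δ i) ≤ (w i).length := by
  choose ψ hψ hmem using hcover
  have targets_on_walk (i : ι) : ∀ x ∈ {x | ∃ m, ψ m = i ∧ t m = x}, x ∈ (w i).support := by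
    rintro _ ⟨m, rfl, rfl⟩
    exact hmem m
  choose σ hnodup hσ hle using fun i =>
    exists_nodup_mem_iff_chainedDist_le_length (w i) (targets_on_walk i)
  exact ⟨ψ, σ, hψ, fun i => ⟨hnodup i, hσ i⟩, hle⟩

/-- Admissibility of the min-sum MHPP heuristic: for any feasible set of
covering walks (one per agent, to distinct eligible goals, collectively
visiting every target via an eligible agent), the sum `Σ_i length(w_i)` is
bounded below by the optimal min-sum multi-agent Hamiltonian path value over
all eligible target assignments, injective eligible goal assignments, and
orderings of each agent's assigned targets. -/
theorem minsum_mhpp_admissible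
    {V : Type*} [Fintype V] [DecidableEq V] (G : SimpleGraph V)
    (hconn : G.Connected) (N M : ℕ)
    (o : Fin N → V) (Vd : Set V) (t : Fin M → V) (fA : V → Set (Fin N))
    (δ : Fin N → V) (hδinj : Function.Injective δ)
    (hδ : ∀ i, δ i ∈ Vd ∧ i ∈ fA (δ i))
    (w : ∀ i : Fin N, G.Walk (o i) (δ i))
    (hcover : ∀ m : Fin M, ∃ i : Fin N, i ∈ fA (t m) ∧ t m ∈ (w i).support) :
    sInf {n : ℕ | ∃ (ψ : Fin M → Fin N) (δ' : Fin N → V) (σ : Fin N → List V),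
        (∀ m, ψ m ∈ fA (t m)) ∧
        Function.Injective δ' ∧ (∀ i, δ' i ∈ Vd ∧ i ∈ fA (δ' i)) ∧
        (∀ i, (σ i).Nodup ∧ (∀ x, x ∈ σ i ↔ ∃ m, ψ m = i ∧ t m = x)) ∧
        n = ∑ i, chainedDist G (o i) (σ i) (δ' i)} ≤
      ∑ i, (w i).length := by
  obtain ⟨ψ, σ, hψ, hσ, hle⟩ := minsum_mhpp_admissible_general G o δ t fA w hcover
  exact le_trans (Nat.sInf_le ⟨ψ, δ, σ, hψ, hδinj, hδ, hσ, rfl⟩)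
    (Finset.sum_le_sum fun i _ => hle i)
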